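/- Let μ be a positive Borel measure on ℝ with all moments finite, let n ≥ 2, and assume H_k[μ] ≠ 0 for every k with 1 ≤ k ≤ n−1. Let x ∈ ℂ with x ≠ 0, let y ∈ ℂ and a ∈ ℂ. Then the determinant of the n×n matrix whose (j,k) entry equals μ_{j+k−2} for 1 ≤ j,k ≤ n−1, equals x^{n−1−j} when k = n and 1 ≤ j ≤ n−1, equals y^{k−1} when j = n and 1 ≤ k ≤ n−1, and equals a when j = k = n, is equal to H_{n−1}[μ] · ( a − x^{n−2} K_{n−2}(1/x, y) ). -/

import Mathlib

open MeasureTheory Matrix Finset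

/-- The `k`-th moment of a positive measure `μ` on `ℝ`. -/
noncomputable def mom (μ : Measure ℝ) (k : ℕ) : ℝ := ∫ x, x ^ k ∂μ

/-- The `n × n` Hankel determinant `H_n[μ] = det (μ_{j+k})_{j,k=0}^{n-1}` (with `H_0[μ] = 1`). -/
noncomputable def hankelDet (μ : Measure ℝ) (n : ℕ) : ℝ :=
  Matrix.det (Matrix.of fun j k : Fin n => mom μ (j + k))

/-- The `k`-th monic orthogonal polynomial associated with `μ`, evaluated at `z ∈ ℂ`. -/
noncomputable def monicOP (μ : Measure ℝ) (k : ℕ) (z : ℂ) : ℂ :=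
  ((hankelDet μ k : ℝ) : ℂ)⁻¹ *
    Matrix.det (Matrix.of fun i j : Fin (k + 1) =>
      if (i : ℕ) < k then ((mom μ ((i : ℕ) + (j : ℕ)) : ℝ) : ℂ) else z ^ (j : ℕ))

/-- The norm `h_k = H_{k+1}[μ] / H_k[μ]` of the `k`-th monic orthogonal polynomial. -/
noncomputable def opNorm (μ : Measure ℝ) (k : ℕ) : ℝ := hankelDet μ (k + 1) / hankelDet μ k

/-- The reproducing kernel `K_N(x,y) = Σ_{k=0}^{N} P_k(x) P_k(y) / h_k`. -/
noncomputable def repKer (μ : Measure ℝ) (N : ℕ) (x y : ℂ) : ℂ :=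
  ∑ k ∈ Finset.range (N + 1), monicOP μ k x * monicOP μ k y / ((opNorm μ k : ℝ) : ℂ)

/-!
Write `H_k` for the leading principal minors of an infinite matrix `G`, and frame its leading
`m × m` block by a column `u`, a row `v` and a corner `a`. Eliminating the leading `k × k` block
turns a `(k + 2) × (k + 2)` determinant into a `2 × 2` determinant of framed determinants
(Sylvester's identity). Hence the ratio of the framed determinant of size `m` to `H_m` drops, as `m`
grows from `k` to `k + 1`, by a product of two framed determinants over `H_k H_{k+1}`. For a Hankel
matrix framed by powers of `x` and `y` that drop is `P_k(x) P_k(y) / h_k`, so the ratios telescope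
to the reproducing kernel. The reversed column is `x ^ (n - 2)` times the column of powers of
`1 / x`.
-/

section Framed

variable {R ι κ : Type*}

/-- The matrix `A` framed by the column `u` on the right, the row `v` below and the corner entry
`a`. -/
def framed (A : Matrix ι ι R) (u v : ι → R) (a : R) : Matrix (ι ⊕ Fin 1) (ι ⊕ Fin 1) R :=
  fromBlocks A (replicateCol (Fin 1) u) (replicateRow (Fin 1) v) (of fun _ _ => a)

variable [CommRing R] [Fintype ι] [DecidableEq ι] [Fintype κ] [DecidableEq κ]

theorem det_framed (A : Matrix ι ι R) [Invertible A] (u v : ι → R) (a : R) :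
    (framed A u v a).det = A.det * (a - v ⬝ᵥ ⅟A *ᵥ u) := by
  rw [framed, det_fromBlocks₁₁, det_unique (n := Fin 1), Matrix.mul_assoc, ← replicateCol_mulVec]
  rfl

theorem det_of_det_framed (A : Matrix ι ι R) [Invertible A] (B : Matrix ι κ R)
    (C : Matrix κ ι R) (D : Matrix κ κ R) :
    A.det * (of fun i j => (framed A (B.col j) (C.row i) (D i j)).det).det =
      A.det ^ Fintype.card κ * (fromBlocks A B C D).det := by
  have schur : (of fun i j => (framed A (B.col j) (C.row i) (D i j)).det) =
      A.det • (D - C * ⅟A * B) := by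
    ext i j
    rw [of_apply, det_framed, Matrix.mul_assoc]
    rfl
  rw [schur, det_smul, det_fromBlocks₁₁, mul_left_comm]

end Framed

section FramedMinor

/-- The leading principal `m × m` block of an infinite matrix. -/
def leadingBlock {R : Type*} (G : Matrix ℕ ℕ R) (m : ℕ) : Matrix (Fin m) (Fin m) R :=
  G.submatrix (↑) (↑)

variable {R : Type*} [CommRing R] (G : Matrix ℕ ℕ R) (m : ℕ) (u v : ℕ → R) (a : R)

/-- The leading principal minor of order `m` of an infinite matrix. -/
def leadingMinor : R := (leadingBlock G m).det

/-- The determinant of the leading `m × m` block of `G` framed by the first `m` entries of the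
column `u` and of the row `v`, with corner entry `a`. The frame sits at index `m` of
`Fin (m + 1)`. -/
def framedMinor : R :=
  (of fun i j : Fin (m + 1) =>
    if (i : ℕ) < m then (if (j : ℕ) < m then G i j else u i)
    else (if (j : ℕ) < m then v j else a)).det

@[simp]
theorem leadingMinor_zero : leadingMinor G 0 = 1 := det_isEmpty

@[simp]
theorem framedMinor_zero : framedMinor G 0 u v a = a := by
  simp [framedMinor]

theorem framedMinor_eq_det_framed :
    framedMinor G m u v a =
      (framed (leadingBlock G m) (fun i => u i) (fun j => v j) a).det := by
  rw [framedMinor, ← det_submatrix_equiv_self finSumFinEquiv]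
  congr 1
  ext (i | i) (j | j) <;> simp [framed, leadingBlock]

theorem leadingMinor_succ :
    leadingMinor G (m + 1) = framedMinor G m (G.col m) (G.row m) (G m m) := by
  rw [leadingMinor, framedMinor]
  congr 1
  ext i j
  induction i using Fin.lastCases <;> induction j using Fin.lastCases <;> simp [leadingBlock]

theorem framedMinor_transpose : framedMinor Gᵀ m v u a = framedMinor G m u v a := by
  rw [framedMinor, ← det_transpose, framedMinor]
  congr 1
  ext i j
  induction i using Fin.lastCases <;> induction j using Fin.lastCases <;> simp

theorem framedMinor_smul_col (t : R) :
    framedMinor G m (t • u) v (t * a) = t * framedMinor G m u v a := by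
  have scale : ∏ j : Fin (m + 1), (if (j : ℕ) < m then 1 else t) = t := by
    simp [Fin.prod_univ_castSucc]
  rw [framedMinor, framedMinor]
  conv_rhs => rw [← scale, ← det_mul_row]
  congr 1
  ext i j
  induction i using Fin.lastCases <;> induction j using Fin.lastCases <;> simp

variable {u} in
theorem framedMinor_congr_col {u' : ℕ → R} (h : ∀ i < m, u i = u' i) :
    framedMinor G m u v a = framedMinor G m u' v a := by
  rw [framedMinor, framedMinor]
  congr 1
  ext i j
  induction i using Fin.lastCases <;> induction j using Fin.lastCases <;> simp [h]

theorem framedMinor_succ_eq_det_fromBlocks :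
    framedMinor G (m + 1) u v a =
      (fromBlocks (leadingBlock G m) (of fun i : Fin m => ![G i m, u i])
        (of ![fun j : Fin m => G m j, fun j => v j]) !![G m m, u m; v m, a]).det := by
  rw [framedMinor, ← det_submatrix_equiv_self (finSumFinEquiv (m := m) (n := 2))]
  congr 1
  ext (i | i) (j | j)
  · simp [leadingBlock]
  · fin_cases j <;> simp
  · fin_cases i <;> simp
  · fin_cases i <;> fin_cases j <;> simp

theorem leadingMinor_mul_framedMinor_succ (hm : IsUnit (leadingMinor G m)) :
    leadingMinor G m * framedMinor G (m + 1) u v a =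
      leadingMinor G (m + 1) * framedMinor G m u v a -
        framedMinor G m u (G.row m) (u m) * framedMinor G m (G.col m) v (v m) := by
  let := invertibleOfIsUnitDet (leadingBlock G m) hm
  have sylvester := det_of_det_framed (leadingBlock G m) (of fun i : Fin m => ![G i m, u i])
    (of ![fun j : Fin m => G m j, fun j => v j]) !![G m m, u m; v m, a]
  rw [← framedMinor_succ_eq_det_fromBlocks, Fintype.card_fin, pow_two, mul_assoc] at sylvester
  have cancelled := hm.mul_left_cancel sylvester
  rw [det_fin_two] at cancelled
  rw [leadingMinor_succ]
  simp only [framedMinor_eq_det_framed G m]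
  exact cancelled.symm

theorem framedMinor_eq_leadingMinor_mul {K : Type*} [Field K] (G : Matrix ℕ ℕ K) (m : ℕ)
    (hG : ∀ k ≤ m, leadingMinor G k ≠ 0) (u v : ℕ → K) (a : K) :
    framedMinor G m u v a = leadingMinor G m *
      (a - ∑ k ∈ range m, framedMinor G k u (G.row k) (u k) * framedMinor G k (G.col k) v (v k) /
        (leadingMinor G k * leadingMinor G (k + 1))) := by
  induction m with
  | zero => simp
  | succ m ih =>
    have hm := hG m m.le_succ
    have hm' := hG (m + 1) le_rfl
    have recurrence := leadingMinor_mul_framedMinor_succ G m u v a hm.isUnit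
    rw [ih fun k hk => hG k (hk.trans m.le_succ)] at recurrence
    apply mul_left_cancel₀ hm
    rw [recurrence, sum_range_succ]
    field_simp
    ring

end FramedMinor

section Hankel

/-- The infinite Hankel matrix of the moment sequence `c`. -/
def hankel {R : Type*} (c : ℕ → R) : Matrix ℕ ℕ R := of fun i j => c (i + j)

theorem hankel_transpose {R : Type*} (c : ℕ → R) : (hankel c)ᵀ = hankel c := by
  ext i j
  simp [hankel, add_comm]

theorem framedMinor_hankel_row {R : Type*} [CommRing R] (c : ℕ → R) (k : ℕ) (u : ℕ → R) (a : R) :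
    framedMinor (hankel c) k u ((hankel c).row k) a =
      framedMinor (hankel c) k ((hankel c).col k) u a := by
  have row_eq_col : (hankel c).row k = (hankel c).col k :=
    congrArg (Matrix.col · k) (hankel_transpose c)
  rw [← framedMinor_transpose, hankel_transpose, row_eq_col]

variable {K : Type*} [Field K] (c : ℕ → K)

/-- The value at `z` of the `k`-th monic orthogonal polynomial of the moment sequence `c`, given by
its determinantal formula; meaningful only when the `k`-th Hankel determinant is nonzero. -/
def hankelOP (k : ℕ) (z : K) : K :=
  (leadingMinor (hankel c) k)⁻¹ * framedMinor (hankel c) k ((hankel c).col k) (z ^ ·) (z ^ k)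

/-- The reproducing kernel `∑_{k ≤ N} P_k(x) P_k(y) / h_k` of the moment sequence `c`, with
`h_k = H_{k+1} / H_k` a ratio of Hankel determinants. -/
def hankelKernel (N : ℕ) (x y : K) : K :=
  ∑ k ∈ range (N + 1), hankelOP c k x * hankelOP c k y /
    (leadingMinor (hankel c) (k + 1) / leadingMinor (hankel c) k)

theorem framedMinor_hankel_pow (m : ℕ)
    (hc : ∀ k, 1 ≤ k → k ≤ m + 1 → leadingMinor (hankel c) k ≠ 0) (x y a : K) :
    framedMinor (hankel c) (m + 1) (x ^ ·) (y ^ ·) a =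
      leadingMinor (hankel c) (m + 1) * (a - hankelKernel c m x y) := by
  have minor_ne_zero : ∀ k ≤ m + 1, leadingMinor (hankel c) k ≠ 0
    | 0, _ => by simp
    | k + 1, hk => hc (k + 1) k.succ_pos hk
  rw [framedMinor_eq_leadingMinor_mul _ _ minor_ne_zero, hankelKernel]
  congr 2
  refine sum_congr rfl fun k hk => ?_
  have hk₀ := minor_ne_zero k (mem_range.mp hk).le
  rw [framedMinor_hankel_row, hankelOP, hankelOP]
  field_simp

theorem framed_hankel_reversed_column_eq_general (m : ℕ)
    (hc : ∀ k, 1 ≤ k → k ≤ m + 1 → leadingMinor (hankel c) k ≠ 0)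
    {x : K} (hx : x ≠ 0) (y a : K) :
    framedMinor (hankel c) (m + 1) (fun j => x ^ (m - j)) (y ^ ·) a =
      leadingMinor (hankel c) (m + 1) * (a - x ^ m * hankelKernel c m x⁻¹ y) := by
  have hxm : x ^ m ≠ 0 := pow_ne_zero m hx
  have reversed : ∀ j < m + 1, x ^ (m - j) = (x ^ m • (x⁻¹ ^ ·) : ℕ → K) j := fun j hj => by
    simp [pow_sub₀ x hx (Nat.lt_succ_iff.mp hj)]
  calc framedMinor (hankel c) (m + 1) (fun j => x ^ (m - j)) (y ^ ·) a
      = framedMinor (hankel c) (m + 1) (x ^ m • (x⁻¹ ^ ·)) (y ^ ·) (x ^ m * (a / x ^ m)) := by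
        rw [framedMinor_congr_col _ _ _ _ reversed, mul_div_cancel₀ _ hxm]
    _ = x ^ m * (leadingMinor (hankel c) (m + 1) * (a / x ^ m - hankelKernel c m x⁻¹ y)) := by
        rw [framedMinor_smul_col, framedMinor_hankel_pow c m hc]
    _ = leadingMinor (hankel c) (m + 1) * (a - x ^ m * hankelKernel c m x⁻¹ y) := by
        field_simp

end Hankel

section Measure

variable (μ : Measure ℝ)

theorem leadingMinor_hankel_mom (n : ℕ) :
    leadingMinor (hankel fun k => (mom μ k : ℂ)) n = hankelDet μ n :=
  (RingHom.map_det Complex.ofRealHom _).symm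

theorem hankelOP_mom (k : ℕ) (z : ℂ) :
    hankelOP (fun k => (mom μ k : ℂ)) k z = monicOP μ k z := by
  rw [hankelOP, monicOP, leadingMinor_hankel_mom, framedMinor]
  congr 2
  ext i j
  induction i using Fin.lastCases <;> induction j using Fin.lastCases <;> simp [hankel]

theorem hankelKernel_mom (N : ℕ) (x y : ℂ) :
    hankelKernel (fun k => (mom μ k : ℂ)) N x y = repKer μ N x y := by
  simp only [hankelKernel, repKer, opNorm, hankelOP_mom, leadingMinor_hankel_mom,
    Complex.ofReal_div]

end Measure

/-- The single-framed Hankel determinant with reversed monomial powers in the last column: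
it equals `H_{n-1}[μ] · ( a - x^{n-2} K_{n-2}(1/x, y) )`. -/
theorem framed_hankel_reversed_column_eq
    (μ : Measure ℝ) (hmom : ∀ k : ℕ, Integrable (fun x : ℝ => x ^ k) μ)
    (n : ℕ) (hn : 2 ≤ n)
    (hH : ∀ k : ℕ, 1 ≤ k → k ≤ n - 1 → hankelDet μ k ≠ 0)
    (x : ℂ) (hx : x ≠ 0) (y a : ℂ) :
    Matrix.det (Matrix.of fun j k : Fin n =>
      if hj : (j : ℕ) < n - 1 then
        (if hk : (k : ℕ) < n - 1 then ((mom μ ((j : ℕ) + (k : ℕ)) : ℝ) : ℂ)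
         else x ^ (n - 2 - (j : ℕ)))
      else
        (if hk : (k : ℕ) < n - 1 then y ^ (k : ℕ) else a)) =
    ((hankelDet μ (n - 1) : ℝ) : ℂ) * (a - x ^ (n - 2) * repKer μ (n - 2) x⁻¹ y) := by
  obtain ⟨m, rfl⟩ := Nat.exists_eq_add_of_le' hn
  rw [← leadingMinor_hankel_mom, ← hankelKernel_mom]
  exact framed_hankel_reversed_column_eq_general (fun k => (mom μ k : ℂ)) m
    (fun k hk hkm => leadingMinor_hankel_mom μ k ▸ Complex.ofReal_ne_zero.mpr (hH k hk hkm)) hx y a
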